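/- Let K' = [K,K] be the derived subgroup of the kneading group K. For every letter z ∈ ℤ and every g ∈ K there exists h ∈ K' whose section at the length-one word z satisfies h|_z = g. -/

import Mathlib

/-- States of the kneading automaton: `a i` is the paper's `a_{i+1}` (for `i < k`),
`b i` is the paper's `b_{i+1}` (for `i < p`), and `id` is the identity state. -/
inductive KState : Type
  | a (i : ℕ)
  | b (i : ℕ)
  | id
  deriving DecidableEq

/-- Transition function of the kneading automaton `𝒦(x₁…x_k, y₁…y_p)`, where the paper's
`x_i` is `x (i-1)` and `y_i` is `y (i-1)`.  `KTrans k p x y s z = (output letter, restriction)`. -/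
def KTrans (k p : ℕ) (x y : ℕ → ℤ) : KState → ℤ → ℤ × KState
  | .a 0, z => (z + 1, .id)
  | .a (i+1), z => if z = x i then (z, .a i) else (z, .id)
  | .b 0, z =>
      if z = x (k-1) then (z, .a (k-1))
      else if z = y (p-1) then (z, .b (p-1))
      else (z, .id)
  | .b (i+1), z => if z = y i then (z, .b i) else (z, .id)
  | .id, z => (z, .id)

/-- The action of a state on the tree `ℤ*` of finite words over `ℤ`,
defined recursively by `q(zv) = q(z)·(q|_z)(v)`. -/
def stateAct (k p : ℕ) (x y : ℕ → ℤ) : KState → List ℤ → List ℤ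
  | _, [] => []
  | s, z :: v => (KTrans k p x y s z).1 :: stateAct k p x y (KTrans k p x y s z).2 v

/-- The generating states `S = {a₁,…,a_k, b₁,…,b_p}`. -/
def IsGen (k p : ℕ) (s : KState) : Prop :=
  (∃ i, i < k ∧ s = .a i) ∨ (∃ j, j < p ∧ s = .b j)

/-- The generators of the kneading group, as permutations of `List ℤ` whose underlying
function is the action of a generating state. -/
def SGens (k p : ℕ) (x y : ℕ → ℤ) : Set (Equiv.Perm (List ℤ)) :=
  {g | ∃ s : KState, IsGen k p s ∧ ⇑g = stateAct k p x y s}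

/-- The kneading group `K = 𝕂(x₁…x_k, y₁…y_p)`. -/
def Kgroup (k p : ℕ) (x y : ℕ → ℤ) : Subgroup (Equiv.Perm (List ℤ)) :=
  Subgroup.closure (SGens k p x y)

/-!
Every generator `s` is the section at a letter `c` of some generator `q` that fixes the first level
of the tree and has trivial section at another letter `d`. The powers of `a₁` act transitively on
the letters with trivial sections. If `t` is one taking `d` to `c`, then `t * q⁻¹ * t⁻¹` fixes `c`
with the trivial section that `q⁻¹` has at `d`, so `⁅q, t⁆ = q * (t * q⁻¹ * t⁻¹)` fixes `c` with
section `s`. Conjugating by a further power of `a₁` moves `c` to any prescribed letter.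
-/

open Equiv

open scoped commutatorElement

section Sections

variable {α : Type*}

/-- `HasSection h z z' g` says that `h` takes the letter `z` to `z'` and that its section `h|_z` is
`g`. The image letter is an argument so that sections compose without evaluating `h`. -/
def HasSection (h : Perm (List α)) (z z' : α) (g : Perm (List α)) : Prop :=
  ∀ w : List α, h (z :: w) = z' :: g w

namespace HasSection

variable {h h₁ h₂ q t u g g₁ g₂ : Perm (List α)} {c d z z' z'' : α}

theorem one (z : α) : HasSection 1 z z 1 := fun _ => rfl

theorem mul (H₁ : HasSection h₁ z' z'' g₁) (H₂ : HasSection h₂ z z' g₂) :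
    HasSection (h₁ * h₂) z z'' (g₁ * g₂) := fun w => by
  rw [Perm.mul_apply, H₂, H₁, Perm.mul_apply]

theorem inv (H : HasSection h z z' g) : HasSection h⁻¹ z' z g⁻¹ := fun w => by
  rw [Perm.inv_eq_iff_eq, H]
  simp

theorem conj (Hu : HasSection u z z' 1) (H : HasSection h z z g) :
    HasSection (u * h * u⁻¹) z' z' g := by
  simpa using (Hu.mul H).mul Hu.inv

theorem commutatorElement (Hc : HasSection q c c g) (Hd : HasSection q d d 1)
    (Ht : HasSection t d c 1) : HasSection ⁅q, t⁆ c c g := by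
  simpa [commutatorElement_def] using ((Hc.mul Ht).mul Hd.inv).mul Ht.inv

theorem zpow {e : Perm α} (H : ∀ z, HasSection t z (e z) 1) (n : ℤ) (z : α) :
    HasSection (t ^ n) z ((e ^ n) z) 1 := by
  induction n generalizing z with
  | zero => exact one z
  | succ n ih =>
    rw [zpow_add_one, zpow_add_one]
    exact (ih (e z)).mul (H z)
  | pred n ih =>
    have H_inv : HasSection t⁻¹ z (e⁻¹ z) 1 := by
      simpa using (H (e⁻¹ z)).inv
    rw [zpow_sub_one, zpow_sub_one]
    exact (ih (e⁻¹ z)).mul H_inv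

theorem apply_singleton_append (H : HasSection h z z' g) (hg : g [] = []) (w : List α) :
    h ([z] ++ w) = h [z] ++ g w := by
  rw [List.singleton_append, H, H, hg, List.singleton_append]

end HasSection

/-- The subgroup of all sections `h|_z`, where `h` ranges over the elements of `H` fixing the
letter `z`. -/
def sectionsAt (H : Subgroup (Perm (List α))) (z : α) : Subgroup (Perm (List α)) where
  carrier := {g | ∃ h ∈ H, HasSection h z z g}
  one_mem' := ⟨1, one_mem H, .one z⟩
  mul_mem' := fun ⟨h₁, hh₁, H₁⟩ ⟨h₂, hh₂, H₂⟩ => ⟨h₁ * h₂, mul_mem hh₁ hh₂, H₁.mul H₂⟩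
  inv_mem' := fun ⟨h, hh, H⟩ => ⟨h⁻¹, inv_mem hh, H.inv⟩

theorem mem_sectionsAt_commutator {G : Subgroup (Perm (List α))}
    (hG : ∀ z z', ∃ t ∈ G, HasSection t z z' 1) {q g : Perm (List α)} (hq : q ∈ G) {c d : α}
    (Hc : HasSection q c c g) (Hd : HasSection q d d 1) (z : α) :
    g ∈ sectionsAt ⁅G, G⁆ z := by
  obtain ⟨t, ht, Ht⟩ := hG d c
  obtain ⟨u, hu, Hu⟩ := hG c z
  refine ⟨u * ⁅q, t⁆ * u⁻¹, ?_, Hu.conj (Hc.commutatorElement Hd Ht)⟩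
  rw [conjugate_commutatorElement]
  exact Subgroup.commutator_mem_commutator (mul_mem (mul_mem hu hq) (inv_mem hu))
    (mul_mem (mul_mem hu ht) (inv_mem hu))

end Sections

section KneadingAutomaton

variable (k p : ℕ) (x y : ℕ → ℤ)

theorem KTrans_fst_bijective (s : KState) :
    Function.Bijective fun z => (KTrans k p x y s z).1 := by
  by_cases hs : s = .a 0
  · subst hs
    exact (Equiv.addRight (1 : ℤ)).bijective
  · have fixes_letters : (fun z => (KTrans k p x y s z).1) = id := by
      funext z
      rcases s with (_ | i) | (_ | j) | _
      · exact absurd rfl hs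
      all_goals
        simp only [KTrans, id]
        try split_ifs <;> rfl
    rw [fixes_letters]
    exact Function.bijective_id

theorem stateAct_injective (s : KState) : Function.Injective (stateAct k p x y s) := by
  intro v
  induction v generalizing s with
  | nil => rintro (_ | ⟨z', v'⟩) h <;> simp_all [stateAct]
  | cons z v ih =>
    rintro (_ | ⟨z', v'⟩) h
    · simp [stateAct] at h
    · obtain ⟨hz, hv⟩ := List.cons.inj h
      obtain rfl : z = z' := (KTrans_fst_bijective k p x y s).injective hz
      rw [ih _ hv]

theorem stateAct_surjective (s : KState) : Function.Surjective (stateAct k p x y s) := by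
  intro w
  induction w generalizing s with
  | nil => exact ⟨[], rfl⟩
  | cons z w ih =>
    obtain ⟨z', rfl⟩ := (KTrans_fst_bijective k p x y s).surjective z
    obtain ⟨v, rfl⟩ := ih (KTrans k p x y s z').2
    exact ⟨z' :: v, rfl⟩

/-- The tree automorphism induced by a state of the kneading automaton, as a permutation of the
set of words. -/
noncomputable def statePerm (s : KState) : Perm (List ℤ) :=
  Equiv.ofBijective (stateAct k p x y s)
    ⟨stateAct_injective k p x y s, stateAct_surjective k p x y s⟩

theorem coe_statePerm (s : KState) : ⇑(statePerm k p x y s) = stateAct k p x y s := rfl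

theorem statePerm_id : statePerm k p x y .id = 1 := by
  ext1 w
  rw [coe_statePerm, Perm.one_apply]
  induction w with
  | nil => rfl
  | cons z w ih => exact congrArg (z :: ·) ih

variable {k p x y} {q s : KState} {z z' : ℤ}

theorem hasSection_statePerm (h : KTrans k p x y q z = (z', s)) :
    HasSection (statePerm k p x y q) z z' (statePerm k p x y s) := fun w => by
  simp only [coe_statePerm, stateAct, h]

theorem hasSection_statePerm_one (h : KTrans k p x y q z = (z', .id)) :
    HasSection (statePerm k p x y q) z z' 1 :=
  statePerm_id k p x y ▸ hasSection_statePerm h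

theorem exists_KTrans_b_zero_eq_id : ∃ d, KTrans k p x y (.b 0) d = (d, .id) := by
  obtain ⟨d, hd⟩ := Infinite.exists_notMem_finset {x (k - 1), y (p - 1)}
  simp only [Finset.mem_insert, Finset.mem_singleton, not_or] at hd
  exact ⟨d, by simp [KTrans, hd]⟩

theorem exists_isGen_KTrans_eq (hp : 1 ≤ p) (hxy : x (k - 1) ≠ y (p - 1)) (hs : IsGen k p s) :
    ∃ q c d, IsGen k p q ∧ KTrans k p x y q c = (c, s) ∧ KTrans k p x y q d = (d, .id) := by
  obtain ⟨d, hd⟩ : ∃ d, KTrans k p x y (.b 0) d = (d, .id) := exists_KTrans_b_zero_eq_id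
  rcases hs with ⟨i, hi, rfl⟩ | ⟨j, hj, rfl⟩
  · obtain hi' | rfl : i + 1 < k ∨ i = k - 1 := by omega
    · exact ⟨.a (i + 1), x i, x i + 1, .inl ⟨_, hi', rfl⟩, by simp [KTrans], by simp [KTrans]⟩
    · exact ⟨.b 0, x (k - 1), d, .inr ⟨0, hp, rfl⟩, by simp [KTrans], hd⟩
  · obtain hj' | rfl : j + 1 < p ∨ j = p - 1 := by omega
    · exact ⟨.b (j + 1), y j, y j + 1, .inr ⟨_, hj', rfl⟩, by simp [KTrans], by simp [KTrans]⟩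
    · exact ⟨.b 0, y (p - 1), d, .inr ⟨0, hp, rfl⟩, by simp [KTrans, hxy.symm], hd⟩

end KneadingAutomaton

section KneadingGroup

variable {k p : ℕ} {x y : ℕ → ℤ}

theorem SGens_eq_image : SGens k p x y = statePerm k p x y '' {s | IsGen k p s} := by
  ext g
  simp only [SGens, Set.mem_ofPred_eq, Set.mem_image, ← coe_statePerm, DFunLike.coe_fn_eq, eq_comm]

theorem statePerm_mem_Kgroup {s : KState} (hs : IsGen k p s) :
    statePerm k p x y s ∈ Kgroup k p x y :=
  Subgroup.subset_closure ⟨s, hs, rfl⟩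

theorem Kgroup_le_iff {H : Subgroup (Perm (List ℤ))} :
    Kgroup k p x y ≤ H ↔ ∀ s, IsGen k p s → statePerm k p x y s ∈ H := by
  rw [Kgroup, Subgroup.closure_le, SGens_eq_image, Set.image_subset_iff]
  rfl

theorem Kgroup_le_stabilizer_nil :
    Kgroup k p x y ≤ MulAction.stabilizer (Perm (List ℤ)) ([] : List ℤ) :=
  Kgroup_le_iff.2 fun _ _ => rfl

theorem exists_mem_Kgroup_hasSection_one (hk : 1 ≤ k) (z z' : ℤ) :
    ∃ t ∈ Kgroup k p x y, HasSection t z z' 1 := by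
  have shift (z : ℤ) : HasSection (statePerm k p x y (.a 0)) z (Equiv.addRight 1 z) 1 :=
    hasSection_statePerm_one rfl
  refine ⟨statePerm k p x y (.a 0) ^ (z' - z),
    zpow_mem (statePerm_mem_Kgroup (.inl ⟨0, hk, rfl⟩)) _, ?_⟩
  simpa using HasSection.zpow shift (z' - z) z

theorem Kgroup_le_sectionsAt_commutator (hk : 1 ≤ k) (hp : 1 ≤ p)
    (hxy : x (k - 1) ≠ y (p - 1)) (z : ℤ) :
    Kgroup k p x y ≤ sectionsAt ⁅Kgroup k p x y, Kgroup k p x y⁆ z := by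
  refine Kgroup_le_iff.2 fun s hs => ?_
  obtain ⟨q, c, d, hq, hc, hd⟩ := exists_isGen_KTrans_eq hp hxy hs
  exact mem_sectionsAt_commutator (exists_mem_Kgroup_hasSection_one hk) (statePerm_mem_Kgroup hq)
    (hasSection_statePerm hc) (hasSection_statePerm_one hd) z

end KneadingGroup

theorem stmt10 (k p : ℕ) (hk : 1 ≤ k) (hp : 1 ≤ p) (x y : ℕ → ℤ)
    (hxy : x (k - 1) ≠ y (p - 1)) :
    ∀ z : ℤ, ∀ g ∈ Kgroup k p x y, ∃ h ∈ ⁅Kgroup k p x y, Kgroup k p x y⁆,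
      ∀ w : List ℤ, h ([z] ++ w) = h [z] ++ g w := by
  intro z g hg
  obtain ⟨h, hh, H⟩ := Kgroup_le_sectionsAt_commutator hk hp hxy z hg
  exact ⟨h, hh, H.apply_singleton_append (Kgroup_le_stabilizer_nil hg)⟩
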